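/- Let n ≥ 3, let 0 < φ ≤ π/2 and arccos(cos²φ) < θ ≤ 2φ. Then A(n,θ,φ) = max{M ∈ ℕ : 2 ≤ M ≤ n and arccos(−1/(M−1)) ≥ ω(θ,φ)}. -/

import Mathlib

noncomputable section

/-- The "North pole" `(0, …, 0, 1)` of the unit sphere in `ℝ^n`. -/
def north (n : ℕ) : EuclideanSpace ℝ (Fin n) :=
  if h : 0 < n then EuclideanSpace.single ⟨n - 1, Nat.sub_lt h Nat.one_pos⟩ 1 else 0

/-- Angular distance between two points: `arccos ⟨x, y⟩`. -/
def aDist {n : ℕ} (x y : EuclideanSpace ℝ (Fin n)) : ℝ := Real.arccos (inner ℝ x y : ℝ)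

/-- A finite set of unit vectors with pairwise angular distance at least `θ`. -/
def IsCode {n : ℕ} (θ : ℝ) (C : Finset (EuclideanSpace ℝ (Fin n))) : Prop :=
  (∀ x ∈ C, ‖x‖ = 1) ∧ ∀ x ∈ C, ∀ y ∈ C, x ≠ y → θ ≤ aDist x y

/-- `A(n, θ)`: maximal size of a `θ`-code on the unit sphere `S^{n-1} ⊂ ℝ^n`. -/
def sphereMax (n : ℕ) (θ : ℝ) : ℕ :=
  sSup {M | ∃ C : Finset (EuclideanSpace ℝ (Fin n)), IsCode θ C ∧ C.card = M}

/-- `A(n, θ, φ)`: maximal size of a `θ`-code in the cap of angular radius `φ` about the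
North pole. -/
def capMax (n : ℕ) (θ φ : ℝ) : ℕ :=
  sSup {M | ∃ C : Finset (EuclideanSpace ℝ (Fin n)), IsCode θ C ∧
    (∀ x ∈ C, aDist x (north n) ≤ φ) ∧ C.card = M}

/-- `A(n, θ, [ψ, φ])`: maximal size of a `θ`-code in the strip `Z(n, [ψ, φ])`. -/
def stripMax (n : ℕ) (θ ψ φ : ℝ) : ℕ :=
  sSup {M | ∃ C : Finset (EuclideanSpace ℝ (Fin n)), IsCode θ C ∧
    (∀ x ∈ C, ψ ≤ aDist x (north n) ∧ aDist x (north n) ≤ φ) ∧ C.card = M}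

/-- `m(n, d)`: maximal number of points in the closed unit ball of `ℝ^n` with pairwise
Euclidean distances at least `d`. -/
def ballMax (n : ℕ) (d : ℝ) : ℕ :=
  sSup {M | ∃ C : Finset (EuclideanSpace ℝ (Fin n)), (∀ x ∈ C, ‖x‖ ≤ 1) ∧
    (∀ x ∈ C, ∀ y ∈ C, x ≠ y → d ≤ dist x y) ∧ C.card = M}

/-- `ω(θ, α, β) = arccos((cos θ - cos α cos β) / (sin α sin β))`. -/
def omega2 (θ α β : ℝ) : ℝ :=
  Real.arccos ((Real.cos θ - Real.cos α * Real.cos β) / (Real.sin α * Real.sin β))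

/-- `ω(θ, α) := ω(θ, α, α)`. -/
def omega1 (θ α : ℝ) : ℝ := omega2 θ α α

end

/-!
Let `P` be the orthogonal projection onto `eᗮ`. Two points `x ≠ y` of a `θ`-code in the cap satisfy
`⟪P x, P y⟫ ≤ cos θ - cos² φ < 0`, so after adding a suitable multiple of `e` the projected points
become pairwise obtuse while staying in an open half-space; such vectors are linearly independent,
which bounds their number by the dimension. Expanding `‖∑ P x‖² ≥ 0` gives the bound involving `ω`.
Conversely, a regular simplex in `eᗮ`, scaled by `sin φ` and lifted to height `cos φ`, is a code on
the boundary of the cap that attains both bounds.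
-/

open Real Set
open scoped RealInnerProductSpace

section InnerProductSpace

variable {E ι : Type*} [NormedAddCommGroup E] [InnerProductSpace ℝ E]

theorem linearIndependent_of_pairwise_inner_nonpos {v : ι → E} (z : E)
    (hz : ∀ i, 0 < ⟪z, v i⟫) (hv : Pairwise fun i j ↦ ⟪v i, v j⟫ ≤ 0) :
    LinearIndependent ℝ v :=
  LinearMap.BilinForm.linearIndependent_of_pairwise_le_zero (innerₗ E)
    (fun _ hx ↦ real_inner_self_pos.2 hx) (innerₗ E z) v hz hv

theorem neg_div_card_sub_one_le_of_inner_le {s : Finset ι} (hs : 2 ≤ s.card) {v : ι → E} {a b : ℝ}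
    (ha : ∀ i ∈ s, ⟪v i, v i⟫ ≤ a) (hb : ∀ i ∈ s, ∀ j ∈ s, i ≠ j → ⟪v i, v j⟫ ≤ b) :
    -a / (s.card - 1) ≤ b := by
  classical
  have hcard : (2 : ℝ) ≤ s.card := by exact_mod_cast hs
  have row_le : ∀ i ∈ s, ⟪v i, ∑ j ∈ s, v j⟫ ≤ a + (s.card - 1) * b := by
    intro i hi
    have off_diagonal : ∑ j ∈ s.erase i, ⟪v i, v j⟫ ≤ (s.card - 1) * b := by
      simpa [Finset.card_erase_of_mem hi, Nat.cast_sub (one_le_two.trans hs)] using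
        Finset.sum_le_card_nsmul (s.erase i) (fun j ↦ ⟪v i, v j⟫) b fun j hj ↦
          hb i hi j (Finset.mem_of_mem_erase hj) (Finset.ne_of_mem_erase hj).symm
    rw [inner_sum, ← Finset.add_sum_erase _ _ hi]
    exact add_le_add (ha i hi) off_diagonal
  have total_nonneg : 0 ≤ s.card * (a + (s.card - 1) * b) :=
    calc 0 ≤ ⟪∑ i ∈ s, v i, ∑ j ∈ s, v j⟫ := real_inner_self_nonneg
      _ = ∑ i ∈ s, ⟪v i, ∑ j ∈ s, v j⟫ := sum_inner ..
      _ ≤ s.card * (a + (s.card - 1) * b) := by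
        simpa only [nsmul_eq_mul] using Finset.sum_le_card_nsmul s _ _ row_le
  rw [div_le_iff₀ (by linarith)]
  linarith [nonneg_of_mul_nonneg_right total_nonneg (by linarith)]

theorem inner_starProjection_orthogonal_singleton {e : E} (he : ‖e‖ = 1) (x y : E) :
    ⟪(ℝ ∙ e)ᗮ.starProjection x, (ℝ ∙ e)ᗮ.starProjection y⟫ = ⟪x, y⟫ - ⟪x, e⟫ * ⟪y, e⟫ := by
  simp only [Submodule.starProjection_orthogonal_val, Submodule.starProjection_unit_singleton ℝ he,
    inner_sub_left, inner_sub_right, real_inner_smul_left, real_inner_smul_right,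
    inner_self_eq_one_of_norm_eq_one he, real_inner_comm e]
  ring

theorem inner_self_starProjection_orthogonal_singleton (e x : E) :
    ⟪e, (ℝ ∙ e)ᗮ.starProjection x⟫ = 0 :=
  Submodule.mem_orthogonal_singleton_iff_inner_right.1 (Submodule.starProjection_apply_mem _ x)

theorem exists_orthonormal_of_le_rank {M : ℕ} (hM : (M : Cardinal) ≤ Module.rank ℝ E) :
    ∃ w : Fin M → E, Orthonormal ℝ w :=
  let ⟨_, hv⟩ := Module.le_rank_iff.1 hM
  ⟨_, InnerProductSpace.gramSchmidtNormed_orthonormal hv⟩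

theorem exists_orthonormal_sum_eq {M : ℕ} (hM : (M : Cardinal) ≤ Module.rank ℝ E) {x : E}
    (hx : ‖x‖ ^ 2 = M) : ∃ w : Fin M → E, Orthonormal ℝ w ∧ ∑ i, w i = x := by
  obtain ⟨b, hb⟩ := exists_orthonormal_of_le_rank hM
  have norm_sum : ‖∑ i, b i‖ = ‖x‖ := by
    rw [← sq_eq_sq₀ (norm_nonneg _) (norm_nonneg _), hx,
      ← real_inner_self_eq_norm_sq (∑ i, b i), sum_inner]
    simp [inner_sum, orthonormal_iff_ite.1 hb]
  let R := (ℝ ∙ (∑ i, b i - x))ᗮ.reflection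
  refine ⟨R ∘ b, hb.comp_linearIsometryEquiv R, ?_⟩
  simp only [Function.comp_apply, ← map_sum]
  exact Submodule.reflection_sub norm_sum

theorem exists_orthonormal_inner_eq {e : E} (he : ‖e‖ = 1) {M : ℕ}
    (hrank : (M : Cardinal) ≤ Module.rank ℝ E) :
    ∃ w : Fin M → E, Orthonormal ℝ w ∧ ∀ i, ⟪w i, e⟫ = (√M)⁻¹ := by
  obtain ⟨w, hw, hsum⟩ := exists_orthonormal_sum_eq hrank (x := √M • e) (by simp [norm_smul, he])
  refine ⟨w, hw, fun i ↦ eq_inv_of_mul_eq_one_right ?_⟩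
  rw [← real_inner_smul_right, ← hsum]
  simp [inner_sum, orthonormal_iff_ite.1 hw]

theorem exists_simplex_orthogonal {e : E} (he : ‖e‖ = 1) {M : ℕ} (hM : 2 ≤ M)
    (hrank : (M : Cardinal) ≤ Module.rank ℝ E) :
    ∃ u : Fin M → E, (∀ i, ‖u i‖ = 1) ∧ (∀ i, ⟪u i, e⟫ = 0) ∧
      Pairwise fun i j ↦ ⟪u i, u j⟫ = -1 / (M - 1) := by
  have hM2 : (2 : ℝ) ≤ M := by exact_mod_cast hM
  have hM1 : (0 : ℝ) < M - 1 := by linarith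
  obtain ⟨w, hw, hwe⟩ := exists_orthonormal_inner_eq he hrank
  let u (i : Fin M) : E := √(M / (M - 1)) • (ℝ ∙ e)ᗮ.starProjection (w i)
  have inner_u (i j) : ⟪u i, u j⟫ = M / (M - 1) * (⟪w i, w j⟫ - 1 / M) := by
    rw [real_inner_smul_left, real_inner_smul_right, inner_starProjection_orthogonal_singleton he,
      hwe, hwe, ← mul_assoc, mul_self_sqrt (by positivity), ← mul_inv,
      mul_self_sqrt (by positivity), one_div]
  refine ⟨u, fun i ↦ ?_, fun i ↦ ?_, fun i j hij ↦ ?_⟩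
  · rw [norm_eq_sqrt_real_inner, Real.sqrt_eq_one, inner_u,
      inner_self_eq_one_of_norm_eq_one (hw.1 i)]
    field_simp
  · rw [real_inner_smul_left, real_inner_comm, inner_self_starProjection_orthogonal_singleton,
      mul_zero]
  · dsimp only
    rw [inner_u, hw.2 hij]
    field_simp
    ring

end InnerProductSpace

section Angles

theorem le_arccos_iff_le_cos {θ z : ℝ} (hθ : θ ∈ Icc 0 π) (hz : z ∈ Icc (-1) 1) :
    θ ≤ arccos z ↔ z ≤ cos θ := by
  rw [← strictAntiOn_cos.le_iff_ge ⟨arccos_nonneg z, arccos_le_pi z⟩ hθ, cos_arccos hz.1 hz.2]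

theorem arccos_le_iff_cos_le {φ z : ℝ} (hφ : φ ∈ Icc 0 π) (hz : z ∈ Icc (-1) 1) :
    arccos z ≤ φ ↔ cos φ ≤ z := by
  rw [← strictAntiOn_cos.le_iff_ge hφ ⟨arccos_nonneg z, arccos_le_pi z⟩, cos_arccos hz.1 hz.2]

theorem omega1_le_arccos_neg_one_div_iff {θ φ m : ℝ} (hsin : 0 < sin φ)
    (hcos : cos (2 * φ) ≤ cos θ) (hm : 1 ≤ m) :
    omega1 θ φ ≤ arccos (-1 / m) ↔ cos φ ^ 2 + sin φ ^ 2 * (-1 / m) ≤ cos θ := by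
  have ratio_mem : (cos θ - cos φ * cos φ) / (sin φ * sin φ) ∈ Icc (-1) 1 := by
    rw [mem_Icc, le_div_iff₀ (by positivity), div_le_iff₀ (by positivity)]
    constructor <;> nlinarith [cos_two_mul φ, cos_le_one θ, sin_sq_add_cos_sq φ]
  have neg_inv_mem : -1 / m ∈ Icc (-1) 1 := by
    rw [mem_Icc, le_div_iff₀ (by linarith), div_le_iff₀ (by linarith)]
    constructor <;> linarith
  rw [omega1, omega2, strictAntiOn_arccos.le_iff_ge ratio_mem neg_inv_mem,
    le_div_iff₀ (by positivity), le_sub_iff_add_le', ← sq, ← sq, mul_comm (-1 / m)]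

end Angles

/-- A `θ`-code in the cap of angular radius `φ` about the unit vector `e`, in an arbitrary real
inner product space; for `e = north n` these are the sets whose sizes `capMax` maximizes. -/
structure IsCapCode {E : Type*} [NormedAddCommGroup E] [InnerProductSpace ℝ E]
    (e : E) (θ φ : ℝ) (C : Finset E) : Prop where
  norm_eq_one : ∀ x ∈ C, ‖x‖ = 1
  le_arccos_inner : ∀ x ∈ C, ∀ y ∈ C, x ≠ y → θ ≤ arccos ⟪x, y⟫
  arccos_inner_le : ∀ x ∈ C, arccos ⟪x, e⟫ ≤ φ

section CapCode

variable {E : Type*} [NormedAddCommGroup E] [InnerProductSpace ℝ E] {e : E} {θ φ : ℝ}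
  {C : Finset E} {x y : E} {M : ℕ}

namespace IsCapCode

theorem inner_le_cos (hC : IsCapCode e θ φ C) (hθ : θ ∈ Icc 0 π) (hx : x ∈ C) (hy : y ∈ C)
    (hxy : x ≠ y) : ⟪x, y⟫ ≤ cos θ :=
  (le_arccos_iff_le_cos hθ (real_inner_mem_Icc_of_norm_eq_one (hC.norm_eq_one x hx)
    (hC.norm_eq_one y hy))).1 (hC.le_arccos_inner x hx y hy hxy)

theorem cos_le_inner (hC : IsCapCode e θ φ C) (he : ‖e‖ = 1) (hφ : φ ∈ Icc 0 π) (hx : x ∈ C) :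
    cos φ ≤ ⟪x, e⟫ :=
  (arccos_le_iff_cos_le hφ (real_inner_mem_Icc_of_norm_eq_one (hC.norm_eq_one x hx) he)).1
    (hC.arccos_inner_le x hx)

theorem cos_sq_le_inner_mul_inner (hC : IsCapCode e θ φ C) (he : ‖e‖ = 1)
    (hφ : φ ∈ Icc 0 (π / 2)) (hx : x ∈ C) (hy : y ∈ C) : cos φ ^ 2 ≤ ⟪x, e⟫ * ⟪y, e⟫ := by
  have hφπ : φ ∈ Icc 0 π := ⟨hφ.1, hφ.2.trans (half_le_self pi_nonneg)⟩
  have cos_nonneg : 0 ≤ cos φ := cos_nonneg_of_mem_Icc ⟨by linarith [hφ.1, pi_pos], hφ.2⟩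
  have cos_le := hC.cos_le_inner he hφπ hx
  rw [sq]
  exact mul_le_mul cos_le (hC.cos_le_inner he hφπ hy) cos_nonneg (cos_nonneg.trans cos_le)

theorem inner_starProjection_le (hC : IsCapCode e θ φ C) (he : ‖e‖ = 1) (hθ : θ ∈ Icc 0 π)
    (hφ : φ ∈ Icc 0 (π / 2)) (hx : x ∈ C) (hy : y ∈ C) (hxy : x ≠ y) :
    ⟪(ℝ ∙ e)ᗮ.starProjection x, (ℝ ∙ e)ᗮ.starProjection y⟫ ≤ cos θ - cos φ ^ 2 := by
  rw [inner_starProjection_orthogonal_singleton he]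
  exact sub_le_sub (hC.inner_le_cos hθ hx hy hxy) (hC.cos_sq_le_inner_mul_inner he hφ hx hy)

theorem inner_starProjection_self_le (hC : IsCapCode e θ φ C) (he : ‖e‖ = 1)
    (hφ : φ ∈ Icc 0 (π / 2)) (hx : x ∈ C) :
    ⟪(ℝ ∙ e)ᗮ.starProjection x, (ℝ ∙ e)ᗮ.starProjection x⟫ ≤ sin φ ^ 2 := by
  rw [inner_starProjection_orthogonal_singleton he,
    inner_self_eq_one_of_norm_eq_one (hC.norm_eq_one x hx), sin_sq]
  exact sub_le_sub_left (hC.cos_sq_le_inner_mul_inner he hφ hx hx) 1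

theorem card_le_rank (hC : IsCapCode e θ φ C) (he : ‖e‖ = 1) (hθ : θ ∈ Icc 0 π)
    (hφ : φ ∈ Icc 0 (π / 2)) (hlt : cos θ < cos φ ^ 2) :
    (C.card : Cardinal) ≤ Module.rank ℝ E := by
  let P := (ℝ ∙ e)ᗮ.starProjection
  let μ := √(cos φ ^ 2 - cos θ)
  have sq_μ : μ * μ = cos φ ^ 2 - cos θ := mul_self_sqrt (sub_nonneg.2 hlt.le)
  have inner_e_P (x : E) : ⟪e, P x⟫ = 0 := inner_self_starProjection_orthogonal_singleton e x
  have inner_e_e : ⟪e, e⟫ = 1 := inner_self_eq_one_of_norm_eq_one he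
  have linearIndependent_lift : LinearIndependent ℝ fun x : C ↦ P x + μ • e := by
    refine linearIndependent_of_pairwise_inner_nonpos e (fun x ↦ ?_) fun x y hxy ↦ ?_
    · rw [inner_add_right, inner_e_P, real_inner_smul_right, inner_e_e, zero_add, mul_one]
      exact Real.sqrt_pos.2 (sub_pos.2 hlt)
    · have expand : ⟪P x + μ • e, P y + μ • e⟫ = ⟪P x, P y⟫ + (cos φ ^ 2 - cos θ) := by
        simp only [inner_add_left, inner_add_right, real_inner_smul_left, real_inner_smul_right,
          real_inner_comm e (P x), inner_e_P, inner_e_e]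
        rw [← sq_μ]
        ring
      refine expand.trans_le ?_
      linarith [hC.inner_starProjection_le he hθ hφ x.2 y.2 (Subtype.coe_injective.ne hxy)]
  simpa using linearIndependent_lift.cardinal_le_rank

theorem cos_sq_add_sin_sq_mul_le_cos (hC : IsCapCode e θ φ C) (he : ‖e‖ = 1) (hθ : θ ∈ Icc 0 π)
    (hφ : φ ∈ Icc 0 (π / 2)) (hcard : 2 ≤ C.card) :
    cos φ ^ 2 + sin φ ^ 2 * (-1 / (C.card - 1)) ≤ cos θ := by
  have simplex_bound := neg_div_card_sub_one_le_of_inner_le hcard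
    (v := (ℝ ∙ e)ᗮ.starProjection)
    (fun x hx ↦ hC.inner_starProjection_self_le he hφ hx)
    (fun x hx y hy hxy ↦ hC.inner_starProjection_le he hθ hφ hx hy hxy)
  rw [mul_div_assoc', mul_neg_one]
  linarith

end IsCapCode

theorem exists_isCapCode_card_eq (he : ‖e‖ = 1) (hθ : θ ∈ Ioc 0 π) (hφ : φ ∈ Icc 0 π)
    (hM : 2 ≤ M) (hrank : (M : Cardinal) ≤ Module.rank ℝ E)
    (hcos : cos φ ^ 2 + sin φ ^ 2 * (-1 / (M - 1)) ≤ cos θ) :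
    ∃ C : Finset E, IsCapCode e θ φ C ∧ C.card = M := by
  obtain ⟨u, norm_u, hue, inner_u⟩ := exists_simplex_orthogonal he hM hrank
  let x (i : Fin M) : E := cos φ • e + sin φ • u i
  have inner_e_e : ⟪e, e⟫ = 1 := inner_self_eq_one_of_norm_eq_one he
  have inner_x (i j) : ⟪x i, x j⟫ = cos φ ^ 2 + sin φ ^ 2 * ⟪u i, u j⟫ := by
    simp only [x, inner_add_left, inner_add_right, real_inner_smul_left, real_inner_smul_right,
      real_inner_comm (u j) e, hue, inner_e_e]
    ring
  have inner_x_self (i) : ⟪x i, x i⟫ = 1 := by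
    rw [inner_x, inner_self_eq_one_of_norm_eq_one (norm_u i), mul_one, cos_sq_add_sin_sq]
  have norm_x (i) : ‖x i‖ = 1 := by
    rw [norm_eq_sqrt_real_inner, inner_x_self, Real.sqrt_one]
  have inner_x_e (i) : ⟪x i, e⟫ = cos φ := by
    simp [x, inner_add_left, real_inner_smul_left, hue, he]
  have inner_x_le {i j} (hij : i ≠ j) : ⟪x i, x j⟫ ≤ cos θ := by
    rwa [inner_x, inner_u hij]
  have x_injective : Function.Injective x := by
    have cos_lt_one : cos θ < 1 := by
      simpa using cos_lt_cos_of_nonneg_of_le_pi le_rfl hθ.2 hθ.1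
    intro i j hij
    by_contra hne
    have : ⟪x i, x j⟫ = 1 := by rw [← hij, inner_x_self]
    linarith [inner_x_le hne]
  refine ⟨Finset.univ.map ⟨x, x_injective⟩, ⟨?_, ?_, ?_⟩, by simp⟩
  · simp [norm_x]
  · simp only [Finset.mem_map, Finset.mem_univ, true_and, Function.Embedding.coeFn_mk]
    rintro _ ⟨i, rfl⟩ _ ⟨j, rfl⟩ hij
    refine (le_arccos_iff_le_cos (Ioc_subset_Icc_self hθ) ?_).2 (inner_x_le (ne_of_apply_ne x hij))
    exact real_inner_mem_Icc_of_norm_eq_one (norm_x i) (norm_x j)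
  · simp [inner_x_e, arccos_cos hφ.1 hφ.2]

theorem exists_isCapCode_card_eq_two (he : ‖e‖ = 1) (hE : 2 ≤ Module.rank ℝ E)
    (hθ : θ ∈ Ioc 0 π) (hφ : φ ∈ Icc 0 π) (hle : cos (2 * φ) ≤ cos θ) :
    ∃ C : Finset E, IsCapCode e θ φ C ∧ C.card = 2 := by
  refine exists_isCapCode_card_eq he hθ hφ le_rfl (by exact_mod_cast hE) ?_
  calc cos φ ^ 2 + sin φ ^ 2 * (-1 / ((2 : ℕ) - 1)) = cos (2 * φ) := by
        rw [cos_two_mul', Nat.cast_ofNat]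
        ring
    _ ≤ cos θ := hle

theorem exists_isCapCode_card_eq_iff (he : ‖e‖ = 1) (hθ : θ ∈ Ioc 0 π) (hφ : φ ∈ Ioc 0 (π / 2))
    (hlt : cos θ < cos φ ^ 2) (hle : cos (2 * φ) ≤ cos θ) (hM : 2 ≤ M) :
    (∃ C : Finset E, IsCapCode e θ φ C ∧ C.card = M) ↔
      (M : Cardinal) ≤ Module.rank ℝ E ∧ omega1 θ φ ≤ arccos (-1 / (M - 1)) := by
  have hφπ : φ < π := hφ.2.trans_lt (half_lt_self pi_pos)
  have one_le : (1 : ℝ) ≤ M - 1 := by linarith [show (2 : ℝ) ≤ M by exact_mod_cast hM]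
  rw [omega1_le_arccos_neg_one_div_iff (sin_pos_of_pos_of_lt_pi hφ.1 hφπ) hle one_le]
  constructor
  · rintro ⟨C, hC, rfl⟩
    have hθ' := Ioc_subset_Icc_self hθ
    have hφ' := Ioc_subset_Icc_self hφ
    exact ⟨hC.card_le_rank he hθ' hφ' hlt, hC.cos_sq_add_sin_sq_mul_le_cos he hθ' hφ' hM⟩
  · rintro ⟨hrank, hcos⟩
    exact exists_isCapCode_card_eq he hθ ⟨hφ.1.le, hφπ.le⟩ hM hrank hcos

end CapCode

theorem capMax_eq_sSup_isCapCode (n : ℕ) (θ φ : ℝ) :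
    capMax n θ φ = sSup {M | ∃ C, IsCapCode (north n) θ φ C ∧ C.card = M} := by
  refine congrArg sSup (Set.ext fun M ↦ exists_congr fun C ↦ ?_)
  exact ⟨fun ⟨hC, hcap, hM⟩ ↦ ⟨⟨hC.1, hC.2, hcap⟩, hM⟩,
    fun ⟨hC, hM⟩ ↦ ⟨⟨hC.norm_eq_one, hC.le_arccos_inner⟩, hC.arccos_inner_le, hM⟩⟩

theorem norm_north {n : ℕ} (hn : 0 < n) : ‖north n‖ = 1 := by
  simp [north, hn]

theorem rank_euclideanSpace_fin (n : ℕ) : Module.rank ℝ (EuclideanSpace ℝ (Fin n)) = n := by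
  rw [← Module.finrank_eq_rank, finrank_euclideanSpace_fin]

theorem two_le_rank_euclideanSpace_fin {n : ℕ} (hn : 2 ≤ n) :
    2 ≤ Module.rank ℝ (EuclideanSpace ℝ (Fin n)) := by
  rw [rank_euclideanSpace_fin]
  exact_mod_cast hn

theorem stmt8_general {E : Type*} [NormedAddCommGroup E] [InnerProductSpace ℝ E] {e : E}
    (he : ‖e‖ = 1) (hE : 2 ≤ Module.rank ℝ E) {θ φ : ℝ} (hφ : φ ≤ π / 2)
    (h1 : arccos (cos φ ^ 2) < θ) (h2 : θ ≤ 2 * φ) :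
    sSup {M | ∃ C : Finset E, IsCapCode e θ φ C ∧ C.card = M} =
      sSup {M : ℕ | 2 ≤ M ∧ (M : Cardinal) ≤ Module.rank ℝ E ∧
        omega1 θ φ ≤ arccos (-1 / ((M : ℝ) - 1))} := by
  have hθ : θ ∈ Ioc 0 π := ⟨(arccos_nonneg _).trans_lt h1, by linarith⟩
  have cos_sq_mem : cos φ ^ 2 ∈ Icc (-1) 1 := ⟨by linarith [sq_nonneg (cos φ)], cos_sq_le_one φ⟩
  have hlt : cos θ < cos φ ^ 2 :=
    lt_of_not_ge fun h ↦ h1.not_ge <| (le_arccos_iff_le_cos (Ioc_subset_Icc_self hθ) cos_sq_mem).2 h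
  have hle : cos (2 * φ) ≤ cos θ :=
    cos_le_cos_of_nonneg_of_le_pi hθ.1.le (by linarith) h2
  have hφ_mem : φ ∈ Ioc 0 (π / 2) := ⟨by linarith [hθ.1], hφ⟩
  have code_iff {M : ℕ} (hM : 2 ≤ M) :=
    exists_isCapCode_card_eq_iff he hθ hφ_mem hlt hle hM
  have exists_pair :=
    exists_isCapCode_card_eq_two he hE hθ ⟨hφ_mem.1.le, by linarith [pi_pos]⟩ hle
  refine csSup_eq_csSup_of_forall_exists_le (fun M hM ↦ ?_) fun M ⟨hM, h⟩ ↦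
    ⟨M, (code_iff hM).2 h, le_rfl⟩
  rcases le_total 2 M with h | h
  · exact ⟨M, ⟨h, (code_iff h).1 hM⟩, le_rfl⟩
  · exact ⟨2, ⟨le_rfl, (code_iff le_rfl).1 exists_pair⟩, h⟩

theorem stmt8 (n : ℕ) (hn : 3 ≤ n) (θ φ : ℝ) (hφ : 0 < φ) (hφ2 : φ ≤ Real.pi / 2)
    (h1 : Real.arccos (Real.cos φ ^ 2) < θ) (h2 : θ ≤ 2 * φ) :
    capMax n θ φ =
      sSup {M : ℕ | 2 ≤ M ∧ M ≤ n ∧ omega1 θ φ ≤ Real.arccos (-1 / ((M : ℝ) - 1))} := by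
  simpa only [capMax_eq_sSup_isCapCode, rank_euclideanSpace_fin, Nat.cast_le] using
    stmt8_general (norm_north (by omega)) (two_le_rank_euclideanSpace_fin (by omega)) hφ2 h1 h2
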